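/- Let k ∈ ℕ with k ≥ 2 and let u(y) = exp(i y^{2k}) for y ∈ ℝ. Then the Gabor wave front set of u equals the punctured frequency axis: WF(u) = {0} × (ℝ \ {0}) ⊆ ℝ² \ {0}. -/

import Mathlib

open MeasureTheory

namespace Stmt14

/-- Gaussian-window short-time Fourier transform of `u : ℝ → ℂ`:
`Vu(x,ξ) = ∫ u(y) e^{−iyξ} e^{−(y−x)²} dy`. -/
noncomputable def STFT (u : ℝ → ℂ) (x ξ : ℝ) : ℂ :=
  ∫ y : ℝ, u y * Complex.exp (-(Complex.I) * (y : ℂ) * (ξ : ℂ))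
    * Complex.exp (-(((y - x) ^ 2 : ℝ) : ℂ))

/-- An open cone in `ℝ² \ {0}`. -/
def IsOpenCone (Γ : Set (ℝ × ℝ)) : Prop :=
  IsOpen Γ ∧ (0 : ℝ × ℝ) ∉ Γ ∧ ∀ z ∈ Γ, ∀ r : ℝ, 0 < r → r • z ∈ Γ

/-- The Gabor wave front set of `u : ℝ → ℂ`: the set of `z₀ ∈ ℝ² \ {0}` such that there is
no open cone containing `z₀` on which `Vu` decays faster than any power. -/
def gaborWF (u : ℝ → ℂ) : Set (ℝ × ℝ) :=
  {z | z ≠ 0 ∧ ¬ ∃ Γ : Set (ℝ × ℝ), IsOpenCone Γ ∧ z ∈ Γ ∧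
    ∀ N : ℕ, ∃ M : ℝ, ∀ w ∈ Γ,
      (1 + w.1 ^ 2 + w.2 ^ 2) ^ ((N : ℝ) / 2) * ‖STFT u w.1 w.2‖ ≤ M}

/-- entire extension of the integrand -/
noncomputable def ff (n : ℕ) (x ξ : ℝ) (z : ℂ) : ℂ :=
  Complex.exp (Complex.I * z ^ n - Complex.I * z * ξ - (z - x) ^ 2)

noncomputable def ww (θ : ℝ) : ℂ := Complex.exp (θ * Complex.I)

noncomputable def gg (n : ℕ) (x ξ : ℝ) (θ y : ℝ) : ℂ := ww θ * ff n x ξ (ww θ * y)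

noncomputable def DD (n : ℕ) (x ξ : ℝ) (θ y : ℝ) : ℂ :=
  Complex.I * ww θ * ff n x ξ (ww θ * y) *
    (1 + ww θ * y * (Complex.I * (n * (ww θ * y) ^ (n - 1)) - Complex.I * ξ - 2 * (ww θ * y - x)))

lemma norm_ww (θ : ℝ) : ‖ww θ‖ = 1 := Complex.norm_exp_ofReal_mul_I θ

lemma norm_ff (n : ℕ) (x ξ θ y : ℝ) : ‖ff n x ξ (ww θ * y)‖ =
    Real.exp (-(y ^ n * Real.sin (n * θ)) + y * ξ * Real.sin θ - y ^ 2 * Real.cos (2 * θ)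
      + 2 * x * y * Real.cos θ - x ^ 2) := by
  unfold ff
  rw [Complex.norm_exp]
  congr 1
  have h1 : (ww θ * y) ^ n = ((y ^ n * Real.cos (n * θ) : ℝ) : ℂ)
      + ((y ^ n * Real.sin (n * θ) : ℝ) : ℂ) * Complex.I := by
    have : ww θ ^ n = Complex.exp (((n * θ : ℝ) : ℂ) * Complex.I) := by
      unfold ww
      rw [← Complex.exp_nat_mul]
      congr 1
      push_cast
      ring
    rw [mul_pow, this, Complex.exp_mul_I]
    push_cast
    ring
  rw [h1]
  have h2 : ww θ = (Real.cos θ : ℂ) + (Real.sin θ : ℂ) * Complex.I := by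
    unfold ww
    rw [Complex.exp_mul_I]
    push_cast
    rfl
  rw [h2, Real.cos_two_mul']
  generalize Real.cos (n * θ) = a
  generalize Real.sin (n * θ) = b
  have h3 := Real.sin_sq_add_cos_sq θ
  generalize Real.cos θ = c at *
  generalize Real.sin θ = s at *
  generalize y ^ n = p
  simp [pow_two, -Complex.ofReal_sin, -Complex.ofReal_cos, -Complex.ofReal_pow]
  ring

lemma cont_ww : Continuous ww := by unfold ww; fun_prop
lemma cont_ff (n : ℕ) (x ξ : ℝ) : Continuous (ff n x ξ) := by unfold ff; fun_prop

lemma hasDeriv_ff (n : ℕ) (x ξ : ℝ) (z : ℂ) : HasDerivAt (ff n x ξ)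
    (ff n x ξ z * (Complex.I * (n * z ^ (n - 1)) - Complex.I * ξ - 2 * (z - x))) z := by
  unfold ff
  have h1 : HasDerivAt (fun z : ℂ => Complex.I * z ^ n - Complex.I * z * ξ - (z - x) ^ 2)
      (Complex.I * (n * z ^ (n - 1)) - Complex.I * ξ - 2 * (z - x)) z := by
    have a := (hasDerivAt_pow n z).const_mul Complex.I
    have b := ((hasDerivAt_id z).const_mul Complex.I).mul_const (ξ : ℂ)
    have c := ((hasDerivAt_id z).sub_const (x : ℂ)).pow 2
    have := (a.sub b).sub c
    refine HasDerivAt.congr_deriv this ?_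
    simp
  exact h1.cexp

lemma hasDeriv_gg (n : ℕ) (x ξ θ y : ℝ) :
    HasDerivAt (fun t => gg n x ξ t y) (DD n x ξ θ y) θ := by
  have hw : HasDerivAt ww (ww θ * Complex.I) θ := by
    have : HasDerivAt (fun t : ℝ => (t : ℂ) * Complex.I) (1 * Complex.I) θ :=
      (Complex.ofRealCLM.hasDerivAt (x := θ)).mul_const _
    have := this.cexp
    rw [one_mul] at this
    exact this
  have h1 := HasDerivAt.comp (h₂ := ff n x ξ) θ (hasDeriv_ff n x ξ (ww θ * y))
    (hw.mul_const (y : ℂ))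
  have := hw.mul h1
  unfold gg DD
  refine HasDerivAt.congr_deriv this ?_
  simp only [Function.comp]
  ring

lemma hasDeriv_HH (n : ℕ) (x ξ θ y : ℝ) :
    HasDerivAt (fun y : ℝ => Complex.I * (y : ℂ) * gg n x ξ θ y) (DD n x ξ θ y) y := by
  have hy : HasDerivAt (fun y : ℝ => (y : ℂ)) 1 y := Complex.ofRealCLM.hasDerivAt (x := y)
  have h1 := HasDerivAt.comp (h₂ := ff n x ξ) y (hasDeriv_ff n x ξ (ww θ * y))
    (hy.const_mul (ww θ))
  have := (hy.const_mul Complex.I).mul (h1.const_mul (ww θ))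
  unfold gg DD
  refine HasDerivAt.congr_deriv this ?_
  simp only [Function.comp]
  ring

lemma norm_ff_le (k : ℕ) (hk : 2 ≤ k) (x ξ θ y : ℝ) (h0 : 0 ≤ θ)
    (h1 : θ ≤ Real.pi / (4 * k)) : ‖ff (2 * k) x ξ (ww θ * y)‖ ≤
    Real.exp ((|ξ| + 2 * |x|) ^ 2) * Real.exp (-(1 / 4) * y ^ 2) := by
  rw [norm_ff, ← Real.exp_add]
  apply Real.exp_le_exp.mpr
  have hk' : (2 : ℝ) ≤ k := by exact_mod_cast hk
  have h2 : θ * (4 * k) ≤ Real.pi := by rwa [le_div_iff₀ (by positivity)] at h1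
  have hpi := Real.pi_pos
  have hs : 0 ≤ Real.sin ((2 * k : ℕ) * θ) := by
    apply Real.sin_nonneg_of_nonneg_of_le_pi
    · positivity
    · push_cast; nlinarith
  have hc : 1 / 2 ≤ Real.cos (2 * θ) := by
    rw [← Real.cos_pi_div_three]
    apply Real.cos_le_cos_of_nonneg_of_le_pi <;> nlinarith
  have hyn : 0 ≤ y ^ (2 * k) := by rw [pow_mul]; positivity
  have e1 : y * ξ * Real.sin θ ≤ |ξ| * |y| := by
    calc _ ≤ |y * ξ * Real.sin θ| := le_abs_self _
      _ = |ξ| * |y| * |Real.sin θ| := by rw [abs_mul, abs_mul]; ring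
      _ ≤ |ξ| * |y| * 1 := by gcongr; exact Real.abs_sin_le_one θ
      _ = _ := mul_one _
  have e2 : 2 * x * y * Real.cos θ ≤ 2 * |x| * |y| := by
    calc _ ≤ |2 * x * y * Real.cos θ| := le_abs_self _
      _ = 2 * |x| * |y| * |Real.cos θ| := by rw [abs_mul, abs_mul, abs_mul]; norm_num
      _ ≤ 2 * |x| * |y| * 1 := by gcongr; exact Real.abs_cos_le_one θ
      _ = _ := mul_one _
  have e3 := mul_nonneg hyn hs
  have e4 : y ^ 2 * (1 / 2) ≤ y ^ 2 * Real.cos (2 * θ) := by gcongr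
  have e5 : (|ξ| + 2 * |x|) * |y| ≤ (|ξ| + 2 * |x|) ^ 2 + 1 / 4 * y ^ 2 := by
    rw [← sq_abs y]
    nlinarith [sq_nonneg ((|ξ| + 2 * |x|) - 1 / 2 * |y|)]
  nlinarith [sq_nonneg x]

lemma integrable_pow_gauss (m : ℕ) :
    Integrable (fun y : ℝ => |y| ^ m * Real.exp (-(1 / 4) * y ^ 2)) := by
  have := (integrable_rpow_mul_exp_neg_mul_sq (b := 1 / 4) (by norm_num) (s := m)
    (by have : (0 : ℝ) ≤ m := by positivity
        linarith)).norm
  simpa [abs_mul, Real.abs_exp] using this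

noncomputable def bd (k : ℕ) (x ξ y : ℝ) : ℝ := Real.exp ((|ξ| + 2 * |x|) ^ 2) *
  (|y| ^ 0 * Real.exp (-(1 / 4) * y ^ 2)
  + (2 * k) * (|y| ^ (2 * k) * Real.exp (-(1 / 4) * y ^ 2))
  + (|ξ| + 2 * |x|) * (|y| ^ 1 * Real.exp (-(1 / 4) * y ^ 2))
  + 2 * (|y| ^ 2 * Real.exp (-(1 / 4) * y ^ 2)))

lemma integrable_bd (k : ℕ) (x ξ : ℝ) : Integrable (bd k x ξ) := by
  unfold bd
  exact ((((integrable_pow_gauss 0).add ((integrable_pow_gauss (2 * k)).const_mul _)).add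
    ((integrable_pow_gauss 1).const_mul _)).add ((integrable_pow_gauss 2).const_mul _)).const_mul _

lemma norm_DD_le (k : ℕ) (hk : 2 ≤ k) (x ξ θ y : ℝ) (h0 : 0 ≤ θ)
    (h1 : θ ≤ Real.pi / (4 * k)) : ‖DD (2 * k) x ξ θ y‖ ≤ bd k x ξ y := by
  unfold DD
  have hz : ‖ww θ * y‖ = |y| := by rw [norm_mul, norm_ww]; simp
  rw [norm_mul, norm_mul, norm_mul, norm_ww, Complex.norm_I, one_mul, one_mul]
  have hf := norm_ff_le k hk x ξ θ y h0 h1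
  generalize ww θ * y = z at *
  have hp : ‖1 + z * (Complex.I * ((2 * k : ℕ) * z ^ (2 * k - 1)) - Complex.I * ξ - 2 * (z - x))‖
      ≤ 1 + 2 * k * |y| ^ (2 * k) + (|ξ| + 2 * |x|) * |y| + 2 * |y| ^ 2 := by
    have e : 1 + z * (Complex.I * ((2 * k : ℕ) * z ^ (2 * k - 1)) - Complex.I * ξ - 2 * (z - x))
      = 1 + Complex.I * (((2 * k : ℕ) : ℂ) * (z ^ (2 * k))) + (-(Complex.I * ξ) + 2 * x) * z
        + (-2) * z ^ 2 := by
      rw [show z ^ (2 * k) = z ^ (2 * k - 1) * z from by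
        rw [← pow_succ]; congr 1; omega]
      ring
    rw [e]
    refine (norm_add_le _ _).trans (add_le_add ((norm_add_le _ _).trans (add_le_add
      ((norm_add_le _ _).trans (add_le_add (by simp) ?_)) ?_)) ?_)
    · simp [hz, mul_assoc]
    · rw [norm_mul, hz]
      gcongr
      refine (norm_add_le _ _).trans ?_
      simp
    · simp [hz]
  calc _ ≤ _ := mul_le_mul hf hp (norm_nonneg _) (by positivity)
    _ = _ := by unfold bd; ring

lemma norm_gg_le (k : ℕ) (hk : 2 ≤ k) (x ξ θ y : ℝ) (h0 : 0 ≤ θ)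
    (h1 : θ ≤ Real.pi / (4 * k)) : ‖gg (2 * k) x ξ θ y‖ ≤
    Real.exp ((|ξ| + 2 * |x|) ^ 2) * Real.exp (-(1 / 4) * y ^ 2) := by
  unfold gg
  rw [norm_mul, norm_ww, one_mul]
  exact norm_ff_le k hk x ξ θ y h0 h1

lemma cont_gg (n : ℕ) (x ξ θ : ℝ) : Continuous (gg n x ξ θ) := by
  unfold gg
  have := cont_ff n x ξ
  fun_prop

lemma cont_DD (n : ℕ) (x ξ θ : ℝ) : Continuous (DD n x ξ θ) := by
  unfold DD
  have := cont_ff n x ξ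
  fun_prop

lemma integrable_gbd (x ξ : ℝ) : Integrable (fun y : ℝ =>
    Real.exp ((|ξ| + 2 * |x|) ^ 2) * Real.exp (-(1 / 4) * y ^ 2)) :=
  (integrable_exp_neg_mul_sq (by norm_num)).const_mul _

lemma integrable_gg (k : ℕ) (hk : 2 ≤ k) (x ξ θ : ℝ) (h0 : 0 ≤ θ)
    (h1 : θ ≤ Real.pi / (4 * k)) : Integrable (gg (2 * k) x ξ θ) :=
  (integrable_gbd x ξ).mono' (cont_gg _ _ _ _).aestronglyMeasurable
    (Filter.Eventually.of_forall fun y => norm_gg_le k hk x ξ θ y h0 h1)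

lemma integrable_DD (k : ℕ) (hk : 2 ≤ k) (x ξ θ : ℝ) (h0 : 0 ≤ θ)
    (h1 : θ ≤ Real.pi / (4 * k)) : Integrable (DD (2 * k) x ξ θ) :=
  (integrable_bd k x ξ).mono' (cont_DD _ _ _ _).aestronglyMeasurable
    (Filter.Eventually.of_forall fun y => norm_DD_le k hk x ξ θ y h0 h1)

lemma integral_DD (k : ℕ) (hk : 2 ≤ k) (x ξ θ : ℝ) (h0 : 0 ≤ θ)
    (h1 : θ ≤ Real.pi / (4 * k)) : ∫ y, DD (2 * k) x ξ θ y = 0 := by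
  refine integral_eq_zero_of_hasDerivAt_of_integrable (fun y => hasDeriv_HH (2 * k) x ξ θ y)
    (integrable_DD k hk x ξ θ h0 h1) ?_
  refine ((integrable_pow_gauss 1).const_mul (Real.exp ((|ξ| + 2 * |x|) ^ 2))).mono' ?_ ?_
  · have := cont_gg (2 * k) x ξ θ
    exact Continuous.aestronglyMeasurable (by fun_prop)
  · refine Filter.Eventually.of_forall fun y => ?_
    rw [norm_mul, norm_mul, Complex.norm_I, one_mul, Complex.norm_real, Real.norm_eq_abs]
    calc _ ≤ _ := mul_le_mul_of_nonneg_left (norm_gg_le k hk x ξ θ y h0 h1) (abs_nonneg y)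
      _ = _ := by ring

lemma deriv_G (k : ℕ) (hk : 2 ≤ k) (x ξ θ : ℝ) (h0 : 0 < θ)
    (h1 : θ < Real.pi / (4 * k)) :
    HasDerivAt (fun t => ∫ y, gg (2 * k) x ξ t y) 0 θ := by
  have := (hasDerivAt_integral_of_dominated_loc_of_deriv_le (μ := volume)
    (F := fun t y => gg (2 * k) x ξ t y)
    (F' := fun t y => DD (2 * k) x ξ t y) (x₀ := θ) (bound := bd k x ξ) (Ioo_mem_nhds h0 h1)
    (Filter.Eventually.of_forall fun t => (cont_gg _ _ _ _).aestronglyMeasurable)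
    (integrable_gg k hk x ξ θ h0.le h1.le) (cont_DD _ _ _ _).aestronglyMeasurable
    (Filter.Eventually.of_forall fun y t ht => norm_DD_le k hk x ξ t y ht.1.le ht.2.le)
    (integrable_bd k x ξ)
    (Filter.Eventually.of_forall fun y t ht => hasDeriv_gg _ _ _ _ _)).2
  rwa [integral_DD k hk x ξ θ h0.le h1.le] at this

lemma G_eq (k : ℕ) (hk : 2 ≤ k) (x ξ θ : ℝ) (h0 : 0 < θ)
    (h1 : θ < Real.pi / (4 * k)) :
    ∫ y, gg (2 * k) x ξ 0 y = ∫ y, gg (2 * k) x ξ θ y := by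
  have hconst : ∀ t ∈ Set.Ioc 0 θ, ∫ y, gg (2 * k) x ξ t y = ∫ y, gg (2 * k) x ξ θ y := by
    intro t ht
    have hd : ∀ s ∈ Set.Icc t θ, HasDerivAt (fun t => ∫ y, gg (2 * k) x ξ t y) 0 s :=
      fun s hs => deriv_G k hk x ξ s (ht.1.trans_le hs.1) (hs.2.trans_lt h1)
    exact (constant_of_has_deriv_right_zero
      (fun s hs => (hd s hs).continuousAt.continuousWithinAt)
      (fun s hs => (hd s ⟨hs.1, hs.2.le⟩).hasDerivWithinAt) θ ⟨ht.2, le_rfl⟩).symm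
  have hlim : Filter.Tendsto (fun t => ∫ y, gg (2 * k) x ξ t y) (nhdsWithin 0 (Set.Ioi 0))
      (nhds (∫ y, gg (2 * k) x ξ 0 y)) := by
    refine tendsto_integral_filter_of_dominated_convergence _
      (Filter.Eventually.of_forall fun t => (cont_gg _ _ _ _).aestronglyMeasurable)
      ?_ (integrable_gbd x ξ) ?_
    · filter_upwards [Ioc_mem_nhdsGT h0] with t ht
      exact Filter.Eventually.of_forall fun y =>
        norm_gg_le k hk x ξ t y ht.1.le (ht.2.trans h1.le)
    · exact Filter.Eventually.of_forall fun y =>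
        (hasDeriv_gg _ _ _ _ _).continuousAt.tendsto.mono_left nhdsWithin_le_nhds
  refine tendsto_nhds_unique hlim (tendsto_const_nhds.congr' ?_)
  filter_upwards [Ioc_mem_nhdsGT h0] with t ht
  exact (hconst t ht).symm

lemma STFT_eq (k : ℕ) (x ξ : ℝ) :
    STFT (fun y : ℝ => Complex.exp (Complex.I * (y : ℂ) ^ (2 * k))) x ξ
      = ∫ y, gg (2 * k) x ξ 0 y := by
  unfold STFT gg ww ff
  congr 1
  ext y
  rw [← Complex.exp_add, ← Complex.exp_add]
  simp
  ring

lemma decay (k : ℕ) (hk : 2 ≤ k) (C : ℝ) (hC : 0 ≤ C) : ∃ A : ℝ, 0 ≤ A ∧ ∀ x ξ : ℝ,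
    |ξ| ≤ C * |x| →
    ‖STFT (fun y : ℝ => Complex.exp (Complex.I * (y : ℂ) ^ (2 * k))) x ξ‖
      ≤ A * Real.exp (-(x ^ 2 / 2)) := by
  have hk' : (2 : ℝ) ≤ k := by exact_mod_cast hk
  have hpi := Real.pi_pos
  obtain ⟨θ, h0, h1⟩ : ∃ θ, 0 < θ ∧ θ < Real.pi / (4 * k) := exists_between (by positivity)
  have h2 : θ * (4 * k) < Real.pi := by rwa [lt_div_iff₀ (by positivity)] at h1
  set s := Real.sin ((2 * k : ℕ) * θ) with hs
  have hs0 : 0 < s := by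
    apply Real.sin_pos_of_pos_of_lt_pi
    · push_cast; positivity
    · push_cast; nlinarith
  have hc : 0 ≤ Real.cos (2 * θ) := by
    apply Real.cos_nonneg_of_neg_pi_div_two_le_of_le <;> nlinarith
  set B := (C + 2) ^ 2 / 2 + 1 with hB
  refine ⟨∫ y : ℝ, Real.exp (B ^ 2 / (4 * s) + s) * Real.exp (-1 * y ^ 2),
    integral_nonneg fun y => by positivity, ?_⟩
  intro x ξ hξ
  rw [STFT_eq, G_eq k hk x ξ θ h0 h1, ← integral_mul_const]
  refine norm_integral_le_of_norm_le
    (((integrable_exp_neg_mul_sq (by norm_num)).const_mul _).mul_const _)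
    (Filter.Eventually.of_forall fun y => ?_)
  unfold gg
  rw [norm_mul, norm_ww, one_mul, norm_ff, ← Real.exp_add, ← Real.exp_add]
  apply Real.exp_le_exp.mpr
  rw [← hs]
  have e1 : y * ξ * Real.sin θ ≤ C * |x| * |y| := by
    calc _ ≤ |y * ξ * Real.sin θ| := le_abs_self _
      _ = |ξ| * |y| * |Real.sin θ| := by rw [abs_mul, abs_mul]; ring
      _ ≤ (C * |x|) * |y| * 1 := by gcongr; exact Real.abs_sin_le_one θ
      _ = _ := mul_one _
  have e2 : 2 * x * y * Real.cos θ ≤ 2 * |x| * |y| := by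
    calc _ ≤ |2 * x * y * Real.cos θ| := le_abs_self _
      _ = 2 * |x| * |y| * |Real.cos θ| := by rw [abs_mul, abs_mul, abs_mul]; norm_num
      _ ≤ 2 * |x| * |y| * 1 := by gcongr; exact Real.abs_cos_le_one θ
      _ = _ := mul_one _
  have e3 : (C + 2) * |x| * |y| ≤ x ^ 2 / 2 + (B - 1) * y ^ 2 := by
    rw [← sq_abs x, ← sq_abs y, hB]
    nlinarith [sq_nonneg (|x| - (C + 2) * |y|)]
  have e4 : y ^ 4 - 1 ≤ y ^ (2 * k) := by
    rw [pow_mul, show y ^ 4 = (y ^ 2) ^ 2 by ring]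
    have ht : 0 ≤ y ^ 2 := sq_nonneg y
    generalize y ^ 2 = t at ht
    rcases le_total 1 t with h | h
    · have := pow_le_pow_right₀ h hk
      linarith
    · have : 0 ≤ t ^ k := by positivity
      nlinarith
  have e5 : B * y ^ 2 ≤ B ^ 2 / (4 * s) + s * y ^ 4 := by
    have : B ^ 2 / (4 * s) + s * y ^ 4 - B * y ^ 2 = (B - 2 * s * y ^ 2) ^ 2 / (4 * s) := by
      field_simp
      ring
    have h' : 0 ≤ (B - 2 * s * y ^ 2) ^ 2 / (4 * s) := by positivity
    linarith
  have e6 : (y ^ 4 - 1) * s ≤ y ^ (2 * k) * s := by gcongr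
  have e7 : 0 ≤ y ^ 2 * Real.cos (2 * θ) := by positivity
  nlinarith

lemma decayN (k : ℕ) (hk : 2 ≤ k) (C : ℝ) (hC : 0 ≤ C) (N : ℕ) : ∃ M : ℝ, ∀ x ξ : ℝ,
    |ξ| ≤ C * |x| → (1 + x ^ 2 + ξ ^ 2) ^ ((N : ℝ) / 2) *
    ‖STFT (fun y : ℝ => Complex.exp (Complex.I * (y : ℂ) ^ (2 * k))) x ξ‖ ≤ M := by
  obtain ⟨A, hA, h⟩ := decay k hk C hC
  refine ⟨(1 + C ^ 2) ^ N * (2 ^ N * N.factorial * Real.exp (1 / 2)) * A, fun x ξ hξ => ?_⟩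
  have h1 : (1 + x ^ 2 + ξ ^ 2) ^ ((N : ℝ) / 2) ≤ (1 + x ^ 2 + ξ ^ 2) ^ N := by
    rw [← Real.rpow_natCast (1 + x ^ 2 + ξ ^ 2) N]
    apply Real.rpow_le_rpow_of_exponent_le
    · nlinarith [sq_nonneg x, sq_nonneg ξ]
    · have : (0 : ℝ) ≤ N := by positivity
      linarith
  have h2 : 1 + x ^ 2 + ξ ^ 2 ≤ (1 + C ^ 2) * (1 + x ^ 2) := by
    have : |ξ| ^ 2 ≤ (C * |x|) ^ 2 := by gcongr
    rw [mul_pow, sq_abs, sq_abs] at this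
    nlinarith [sq_nonneg C]
  have h3 : (1 + x ^ 2) ^ N ≤ 2 ^ N * N.factorial * Real.exp (1 / 2) * Real.exp (x ^ 2 / 2) := by
    have := Real.pow_div_factorial_le_exp ((1 + x ^ 2) / 2) (by positivity) N
    rw [div_le_iff₀ (by positivity), div_pow, div_le_iff₀ (by positivity)] at this
    rw [mul_assoc, ← Real.exp_add, show (1 : ℝ) / 2 + x ^ 2 / 2 = (1 + x ^ 2) / 2 by ring]
    linarith
  calc _ ≤ (1 + x ^ 2 + ξ ^ 2) ^ N * (A * Real.exp (-(x ^ 2 / 2))) := by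
        gcongr
        exact h x ξ hξ
    _ ≤ ((1 + C ^ 2) * (1 + x ^ 2)) ^ N * (A * Real.exp (-(x ^ 2 / 2))) := by gcongr
    _ = (1 + C ^ 2) ^ N * (1 + x ^ 2) ^ N * (A * Real.exp (-(x ^ 2 / 2))) := by rw [mul_pow]
    _ ≤ (1 + C ^ 2) ^ N * (2 ^ N * N.factorial * Real.exp (1 / 2) * Real.exp (x ^ 2 / 2))
          * (A * Real.exp (-(x ^ 2 / 2))) := by gcongr
    _ = (1 + C ^ 2) ^ N * (2 ^ N * N.factorial * Real.exp (1 / 2)) * A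
          * (Real.exp (x ^ 2 / 2) * Real.exp (-(x ^ 2 / 2))) := by ring
    _ = _ := by rw [← Real.exp_add, add_neg_cancel, Real.exp_zero, mul_one]

lemma STFT_neg (k : ℕ) (x ξ : ℝ) :
    STFT (fun y : ℝ => Complex.exp (Complex.I * (y : ℂ) ^ (2 * k))) (-x) (-ξ)
      = STFT (fun y : ℝ => Complex.exp (Complex.I * (y : ℂ) ^ (2 * k))) x ξ := by
  unfold STFT
  rw [← integral_neg_eq_self]
  congr 1
  ext y
  have e : (-(y : ℂ)) ^ (2 * k) = (y : ℂ) ^ (2 * k) := by rw [pow_mul, neg_sq, ← pow_mul]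
  have e2 : (-y - -x) ^ 2 = (y - x) ^ 2 := by ring
  rw [e2]
  push_cast
  rw [e]
  congr 3
  ring

open FourierTransform in
lemma not_decay (k : ℕ) (hk : 2 ≤ k) (M : ℝ) (h : ∀ x ξ : ℝ,
    (1 + x ^ 2 + ξ ^ 2) ^ 2 *
    ‖STFT (fun y : ℝ => Complex.exp (Complex.I * (y : ℂ) ^ (2 * k))) x ξ‖ ≤ M) : False := by
  have key : ∀ x : ℝ, 1 + x ^ 2 ≤ M * Real.pi := by
    intro x
    set φ : ℝ → ℂ := fun y => Complex.exp (Complex.I * (y : ℂ) ^ (2 * k)) *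
      Complex.exp (-(((y - x) ^ 2 : ℝ) : ℂ)) with hφ
    have hcont : Continuous φ := by rw [hφ]; fun_prop
    have hnorm : ∀ y, ‖φ y‖ = Real.exp (-1 * (y - x) ^ 2) := by
      intro y
      rw [hφ]
      simp only
      rw [norm_mul, ← Complex.ofReal_pow, mul_comm Complex.I, Complex.norm_exp_ofReal_mul_I,
        ← Complex.ofReal_neg, Complex.norm_exp_ofReal]
      simp
    have hint : Integrable φ := by
      rw [← integrable_norm_iff hcont.aestronglyMeasurable]
      simp_rw [hnorm]
      exact (integrable_exp_neg_mul_sq (b := 1) (by norm_num)).comp_sub_right x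
    have hF : ∀ w : ℝ, 𝓕 φ w =
        STFT (fun y : ℝ => Complex.exp (Complex.I * (y : ℂ) ^ (2 * k))) x (2 * Real.pi * w) := by
      intro w
      rw [Real.fourier_real_eq_integral_exp_smul]
      unfold STFT
      congr 1
      ext y
      rw [hφ, smul_eq_mul]
      simp only
      rw [← Complex.exp_add, ← Complex.exp_add, ← Complex.exp_add, ← Complex.exp_add]
      congr 1
      push_cast
      ring
    have hb : ∀ w : ℝ, ‖𝓕 φ w‖ ≤ M / (1 + x ^ 2) * (1 + w ^ 2)⁻¹ := by
      intro w
      rw [hF]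
      have h1 := h x (2 * Real.pi * w)
      set S := ‖STFT (fun y : ℝ => Complex.exp (Complex.I * (y : ℂ) ^ (2 * k))) x
        (2 * Real.pi * w)‖ with hS
      have hS0 : 0 ≤ S := norm_nonneg _
      rw [← div_eq_mul_inv, div_div, le_div_iff₀ (by positivity), mul_comm]
      refine le_trans ?_ h1
      gcongr
      have : w ^ 2 ≤ (2 * Real.pi * w) ^ 2 := by
        rw [mul_pow]
        have := Real.pi_gt_three
        have : 1 ≤ (2 * Real.pi) ^ 2 := by nlinarith
        nlinarith [sq_nonneg w]
      have a : 1 + x ^ 2 ≤ 1 + x ^ 2 + (2 * Real.pi * w) ^ 2 := by nlinarith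
      have b : 1 + w ^ 2 ≤ 1 + x ^ 2 + (2 * Real.pi * w) ^ 2 := by nlinarith [sq_nonneg x]
      rw [sq (1 + x ^ 2 + (2 * Real.pi * w) ^ 2)]
      gcongr
    have hFc : Continuous (𝓕 φ) :=
      VectorFourier.fourierIntegral_continuous Real.continuous_fourierChar
        (innerSL ℝ).continuous₂ hint
    have hbi : Integrable (fun w : ℝ => M / (1 + x ^ 2) * (1 + w ^ 2)⁻¹) :=
      integrable_inv_one_add_sq.const_mul _
    have hFi : Integrable (𝓕 φ) := hbi.mono' hFc.aestronglyMeasurable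
      (Filter.Eventually.of_forall hb)
    have hinv := hint.fourierInv_fourier_eq hFi (v := x) hcont.continuousAt
    have hn : ‖φ x‖ = 1 := by rw [hnorm]; simp
    rw [← hinv, Real.fourierInv_eq'] at hn
    have : (1 : ℝ) ≤ ∫ w : ℝ, M / (1 + x ^ 2) * (1 + w ^ 2)⁻¹ := by
      refine hn.symm.le.trans ?_
      refine norm_integral_le_of_norm_le hbi (Filter.Eventually.of_forall fun w => ?_)
      rw [norm_smul, Complex.norm_exp_ofReal_mul_I, one_mul]
      exact hb w
    rw [integral_const_mul, integral_univ_inv_one_add_sq, div_mul_eq_mul_div,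
      le_div_iff₀ (by positivity)] at this
    linarith
  have h1 := key (M * Real.pi)
  nlinarith [sq_nonneg (M * Real.pi - 1 / 2)]

/-- For `k ≥ 2`, the Gabor wave front set of `u(y) = exp(i y^{2k})` is
the punctured frequency axis `{0} × (ℝ \ {0})`. -/
theorem stmt_14 (k : ℕ) (hk : 2 ≤ k) :
    gaborWF (fun y : ℝ => Complex.exp (Complex.I * (y : ℂ) ^ (2 * k)))
      = {z : ℝ × ℝ | z.1 = 0 ∧ z.2 ≠ 0} := by
  ext ⟨x0, ξ0⟩
  constructor
  · rintro ⟨hne, hno⟩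
    have hx : x0 = 0 := by
      by_contra hx
      apply hno
      have hx0 : 0 < |x0| := abs_pos.mpr hx
      set C := |ξ0| / |x0| + 1 with hC
      have hC0 : 0 ≤ C := by positivity
      refine ⟨{w | |w.2| < C * |w.1|}, ⟨isOpen_lt (by fun_prop) (by fun_prop), by simp, ?_⟩, ?_, ?_⟩
      · rintro ⟨a, b⟩ hab r hr
        simp only [Set.mem_ofPred_eq, Prod.smul_mk, smul_eq_mul, abs_mul, abs_of_pos hr] at hab ⊢
        nlinarith
      · simp only [Set.mem_ofPred_eq]
        rw [hC, add_mul, div_mul_cancel₀ _ hx0.ne']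
        linarith
      · intro N
        obtain ⟨M, hM⟩ := decayN k hk C hC0 N
        exact ⟨M, fun w hw => hM w.1 w.2 (le_of_lt hw)⟩
    refine ⟨hx, fun h => hne ?_⟩
    simp only at hx h
    rw [hx, h]
    rfl
  · rintro ⟨hx, hξ⟩
    simp only at hx hξ
    subst hx
    refine ⟨fun h => hξ (congrArg Prod.snd h), ?_⟩
    rintro ⟨Γ, ⟨hopen, -, hcone⟩, hmem, hdec⟩
    obtain ⟨ε, hε, hball⟩ := Metric.isOpen_iff.mp hopen _ hmem
    have hξ0 : 0 < |ξ0| := abs_pos.mpr hξ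
    set C := 2 * |ξ0| / ε with hC
    have hC0 : 0 < C := by positivity
    obtain ⟨M1, hM1⟩ := decayN k hk C hC0.le 4
    obtain ⟨M2, hM2⟩ := hdec 4
    have hcov : ∀ x ξ : ℝ, C * |x| < |ξ| → 0 < ξ * ξ0 → (x, ξ) ∈ Γ := by
      intro x ξ hlt hpos
      have hξpos : 0 < |ξ| := lt_of_le_of_lt (by positivity) hlt
      have hr : 0 < ξ / ξ0 := by
        rw [show ξ / ξ0 = ξ * ξ0 / ξ0 ^ 2 by field_simp]
        positivity
      have hne : ξ ≠ 0 := abs_pos.mp hξpos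
      have : (x / (ξ / ξ0), ξ0) ∈ Γ := by
        apply hball
        rw [Metric.mem_ball, Prod.dist_eq, dist_self, Real.dist_eq, sub_zero]
        apply max_lt _ hε
        rw [abs_div, abs_div, div_lt_iff₀ (by positivity), ← mul_div_assoc, lt_div_iff₀ hξ0]
        rw [hC, div_mul_eq_mul_div, div_lt_iff₀ hε] at hlt
        nlinarith [abs_nonneg x]
      have h2 := hcone _ this _ hr
      convert h2 using 1
      ext
      · simp; field_simp
      · simp; field_simp
    apply not_decay k hk (max M1 M2)
    have hcast : ∀ t : ℝ, t ^ (((4 : ℕ) : ℝ) / 2) = t ^ 2 := by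
      intro t
      rw [← Real.rpow_natCast t 2]
      norm_num
    simp only [hcast] at hM1 hM2
    intro x ξ
    rcases le_or_gt |ξ| (C * |x|) with h | h
    · exact (hM1 x ξ h).trans (le_max_left _ _)
    · have hne : ξ ≠ 0 := abs_pos.mp (lt_of_le_of_lt (by positivity) h)
      rcases lt_or_gt_of_ne (mul_ne_zero hne hξ) with h' | h'
      · have := hM2 _ (hcov (-x) (-ξ) (by simpa using h) (by linarith))
        simp only [STFT_neg, neg_sq] at this
        exact this.trans (le_max_right _ _)
      · exact (hM2 _ (hcov x ξ h h')).trans (le_max_right _ _)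


end Stmt14
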